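/- Fix m with 3/2 < m < 2. There is a constant C < ∞ such that for every z ∈ bD_m: ∫_{bD_m} |Re w₁|^{2m−4} · |w−z|^{−2} dH³(w) ≤ C. In particular this integral is finite for every z ∈ bD_m. -/

import Mathlib

open MeasureTheory Complex
open scoped ENNReal

noncomputable section

/-- `ℂ²` with the Euclidean metric. -/
abbrev C2 := EuclideanSpace ℂ (Fin 2)

instance : MeasurableSpace C2 := borel _
instance : BorelSpace C2 := ⟨rfl⟩

/-- The defining function `ρ(w) = |w₂|² + |Re w₁|^m + (Im w₁)² − 1`. -/
def rhom (m : ℝ) (w : C2) : ℝ := ‖w 1‖ ^ 2 + |(w 0).re| ^ m + (w 0).im ^ 2 - 1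

/-- The domain `D_m = {ρ < 0}`. -/
def Dm (m : ℝ) : Set C2 := {w | rhom m w < 0}

/-- The boundary `bD_m = {ρ = 0}`. -/
def bDm (m : ℝ) : Set C2 := {w | rhom m w = 0}

/-- The Cauchy–Leray denominator
`Δ(w,z) = ((m/2)|u₁|^{m−1}·sgn(u₁) − i v₁)(w₁−z₁) + conj(w₂)(w₂−z₂)`. -/
def Deltam (m : ℝ) (w z : C2) : ℂ :=
  ((m / 2 * |(w 0).re| ^ (m - 1) * Real.sign (w 0).re : ℝ) - I * ((w 0).im : ℂ))
      * (w 0 - z 0)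
    + (starRingEnd ℂ) (w 1) * (w 1 - z 1)

/-- The real gradient `∇ρ` on `ℝ⁴ ≅ ℂ²`, written as a vector in `ℂ²`:
`∇ρ(w) = (m|u₁|^{m−1} sgn(u₁) + 2i v₁, 2w₂)`. -/
def gradRhom (m : ℝ) (w : C2) : C2 :=
  (WithLp.equiv 2 (Fin 2 → ℂ)).symm
    ![(m * |(w 0).re| ^ (m - 1) * Real.sign (w 0).re : ℝ)
        + (2 * (w 0).im : ℝ) * I, 2 * w 1]

/-- The inward unit normal `N(z) = −∇ρ(z)/|∇ρ(z)|`. -/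
def Nm (m : ℝ) (z : C2) : C2 := (-‖gradRhom m z‖⁻¹ : ℝ) • gradRhom m z

open Set Metric
open scoped NNReal

/-!
In real coordinates `bD_m` is the hypersurface `∑ |xᵢ|^pᵢ = 1` in `ℝ⁴` with `p = (m, 2, 2, 2)`.
It is covered by finitely many patches, each selecting a coordinate `xᵢ` of constant sign with
`|xᵢ|^pᵢ ≥ 1/4`; as all `pⱼ ≥ 1`, forgetting `xᵢ` is bi-Lipschitz on the patch, so the integral is
dominated by a Lebesgue integral over a cube in the other three coordinates. There `|Re w₁|` is
either bounded below (it was forgotten) or one of the three variables. Bounding `|w - z|⁻²` by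
`∏ |xⱼ - zⱼ|^(-eⱼ)` with `∑ eⱼ = 2` splits the integral into one-dimensional integrals of
`|t|^(-aⱼ) |t - c|^(-eⱼ)`, where `aⱼ` is `4 - 2m` for `Re w₁` and `0` otherwise. These are bounded
uniformly in `c` if `eⱼ < 1 - aⱼ`, and such `eⱼ` exist because `1 + 1 + (1 - (4 - 2m)) > 2`.
-/

theorem setLIntegral_comp_le_of_antilipschitzWith_domRestrict {X Y : Type*}
    [EMetricSpace X] [MeasurableSpace X] [BorelSpace X]
    [EMetricSpace Y] [MeasurableSpace Y] [BorelSpace Y]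
    {f : X → Y} (hf : Measurable f) {A : Set X} {B : Set Y} (hAB : MapsTo f A B) {K : ℝ≥0}
    (hK : AntilipschitzWith K (A.domRestrict f)) {d : ℝ} (hd : 0 ≤ d)
    {g : Y → ℝ≥0∞} (hg : Measurable g) :
    ∫⁻ x in A, g (f x) ∂μH[d] ≤ (K : ℝ≥0∞) ^ d * ∫⁻ y in B, g y ∂μH[d] := by
  have map_le : (μH[d].restrict A).map f ≤ (K : ℝ≥0∞) ^ d • (μH[d].restrict B : Measure Y) := by
    refine Measure.le_iff.2 fun E hE => ?_
    rw [Measure.map_apply hf hE, Measure.restrict_apply (hf hE), Measure.smul_apply,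
      Measure.restrict_apply hE, smul_eq_mul]
    calc μH[d] (f ⁻¹' E ∩ A)
        ≤ μH[d] (Subtype.val '' (A.domRestrict f ⁻¹' (E ∩ B))) :=
          measure_mono fun x hx => ⟨⟨x, hx.2⟩, ⟨hx.1, hAB hx.2⟩, rfl⟩
      _ = μH[d] (A.domRestrict f ⁻¹' (E ∩ B)) :=
          isometry_subtype_coe.hausdorffMeasure_image (Or.inl hd) _
      _ ≤ (K : ℝ≥0∞) ^ d * μH[d] (E ∩ B) := hK.hausdorffMeasure_preimage_le hd _
  calc ∫⁻ x in A, g (f x) ∂μH[d] = ∫⁻ y, g y ∂(μH[d].restrict A).map f :=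
        (lintegral_map hg hf).symm
    _ ≤ ∫⁻ y, g y ∂((K : ℝ≥0∞) ^ d • (μH[d].restrict B : Measure Y)) :=
        lintegral_mono' map_le le_rfl
    _ = (K : ℝ≥0∞) ^ d * ∫⁻ y in B, g y ∂μH[d] := by
        rw [lintegral_smul_measure, smul_eq_mul]

theorem lintegral_fin_prod_eq_prod {n : ℕ} {E : Fin n → Type*} {mE : ∀ i, MeasurableSpace (E i)}
    {μ : ∀ i, Measure (E i)} [∀ i, SigmaFinite (μ i)] {f : ∀ i, E i → ℝ≥0∞}
    (hf : ∀ i, Measurable (f i)) :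
    ∫⁻ x, ∏ i, f i (x i) ∂Measure.pi μ = ∏ i, ∫⁻ t, f i t ∂μ i := by
  induction n with
  | zero => simp
  | succ n ih =>
    have measurable_tail : Measurable fun y : ∀ i : Fin n, E i.succ => ∏ i, f i.succ (y i) :=
      Finset.measurable_prod _ fun i _ => (hf i.succ).comp (measurable_pi_apply i)
    calc ∫⁻ x, ∏ i, f i (x i) ∂Measure.pi μ
        = ∫⁻ y : E 0 × (∀ i : Fin n, E i.succ), f 0 y.1 * ∏ i : Fin n, f i.succ (y.2 i)
            ∂(μ 0).prod (Measure.pi fun i => μ i.succ) := by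
          rw [← (measurePreserving_piFinSuccAbove μ 0).symm.lintegral_comp_emb
            (MeasurableEquiv.measurableEmbedding _)]
          simp only [Fin.prod_univ_succ]
          rfl
      _ = (∫⁻ t, f 0 t ∂μ 0) * ∏ i : Fin n, ∫⁻ t, f i.succ t ∂μ i.succ := by
          rw [lintegral_prod_mul (hf 0).aemeasurable measurable_tail.aemeasurable,
            ih fun i => hf i.succ]
      _ = ∏ i, ∫⁻ t, f i t ∂μ i := (Fin.prod_univ_succ fun i => ∫⁻ t, f i t ∂μ i).symm

theorem setLIntegral_univ_pi_fin_prod_eq_prod {n : ℕ} {E : Fin n → Type*}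
    {mE : ∀ i, MeasurableSpace (E i)} {μ : ∀ i, Measure (E i)} [∀ i, SigmaFinite (μ i)]
    (s : ∀ i, Set (E i)) {f : ∀ i, E i → ℝ≥0∞} (hf : ∀ i, Measurable (f i)) :
    ∫⁻ x in univ.pi s, ∏ i, f i (x i) ∂Measure.pi μ = ∏ i, ∫⁻ t in s i, f i t ∂μ i := by
  rw [Measure.restrict_pi_pi, lintegral_fin_prod_eq_prod hf]

theorem rpow_neg_mul_rpow_neg_le_add (x y : ℝ≥0∞) {a b : ℝ} (ha : 0 ≤ a) (hb : 0 ≤ b) :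
    x ^ (-a) * y ^ (-b) ≤ x ^ (-(a + b)) + y ^ (-(a + b)) := by
  -- Nonnegative powers of inverses add without excluding `0` and `∞`.
  simp only [ENNReal.rpow_neg, ← ENNReal.inv_rpow]
  rw [ENNReal.rpow_add_of_nonneg _ _ ha hb, ENNReal.rpow_add_of_nonneg _ _ ha hb]
  rcases le_total x y with hxy | hyx
  · refine le_add_right ?_
    gcongr
  · refine le_add_left ?_
    gcongr

theorem rpow_neg_sum_le_prod {ι : Type*} (s : Finset ι) {N : ℝ≥0∞} {y : ι → ℝ≥0∞}
    (hy : ∀ i ∈ s, y i ≤ N) {e : ι → ℝ} (he : ∀ i ∈ s, 0 ≤ e i) :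
    N ^ (-∑ i ∈ s, e i) ≤ ∏ i ∈ s, y i ^ (-e i) := by
  simp only [ENNReal.rpow_neg, ← ENNReal.inv_rpow]
  induction s using Finset.cons_induction with
  | empty => simp
  | cons i s hi ih =>
    simp only [Finset.forall_mem_cons] at hy he
    rw [Finset.sum_cons, Finset.prod_cons,
      ENNReal.rpow_add_of_nonneg _ _ he.1 (Finset.sum_nonneg he.2)]
    gcongr
    · exact he.1
    · exact hy.1
    · exact ih hy.2 he.2

section RieszKernel

variable {E : Type*} [NormedAddCommGroup E] [NormedSpace ℝ E] [FiniteDimensional ℝ E]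
  [Nontrivial E] [MeasurableSpace E] [BorelSpace E] (μ : Measure E) [μ.IsAddHaarMeasure]

theorem setLIntegral_ball_enorm_rpow_neg_lt_top {a : ℝ} (ha : a < Module.finrank ℝ E) (r : ℝ) :
    ∫⁻ x in ball (0 : E) r, ‖x‖ₑ ^ (-a) ∂μ < ∞ := by
  have integrable : IntegrableOn (fun x : E => ‖x‖ ^ (-a)) (ball 0 r) μ :=
    integrableOn_ball_of_norm_le_rpow (C := 1) Module.finrank_pos ha
      (.of_forall fun x => by simp [abs_of_nonneg, Real.rpow_nonneg])
      (by fun_prop : Measurable fun x : E => ‖x‖ ^ (-a)).aestronglyMeasurable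
  have ae_ne : ∀ᵐ x ∂μ.restrict (ball 0 r), x ≠ (0 : E) := ae_restrict_of_ae (μ.ae_ne 0)
  refine (lintegral_congr_ae ?_).trans_lt integrable.2
  filter_upwards [ae_ne] with x hx
  rw [← ofReal_norm, ENNReal.ofReal_rpow_of_pos (norm_pos_iff.2 hx),
    Real.enorm_of_nonneg (by positivity)]

theorem exists_forall_setLIntegral_enorm_sub_rpow_neg_le {a : ℝ} (ha0 : 0 ≤ a)
    (ha : a < Module.finrank ℝ E) {s : Set E} (hμs : μ s ≠ ∞) :
    ∃ C : ℝ≥0, ∀ b : E, ∫⁻ x in s, ‖x - b‖ₑ ^ (-a) ∂μ ≤ C := by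
  have ball_lt_top := setLIntegral_ball_enorm_rpow_neg_lt_top μ ha 1
  refine ⟨(∫⁻ x in ball (0 : E) 1, ‖x‖ₑ ^ (-a) ∂μ + μ s).toNNReal, fun b => ?_⟩
  rw [ENNReal.coe_toNNReal (ENNReal.add_ne_top.2 ⟨ball_lt_top.ne, hμs⟩)]
  let K : E → ℝ≥0∞ := (ball 0 1).indicator fun x => ‖x‖ₑ ^ (-a)
  have kernel_le (x : E) : ‖x - b‖ₑ ^ (-a) ≤ K (x - b) + 1 := by
    by_cases hx : x - b ∈ ball (0 : E) 1
    · exact le_add_right (indicator_of_mem hx fun x => ‖x‖ₑ ^ (-a)).ge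
    · refine le_add_left ?_
      rw [mem_ball_zero_iff, not_lt] at hx
      have : 1 ≤ ‖x - b‖ₑ := by
        rw [← ofReal_norm]
        exact ENNReal.one_le_ofReal.2 hx
      exact (ENNReal.rpow_le_rpow_of_exponent_le this (neg_nonpos.2 ha0)).trans_eq ENNReal.rpow_zero
  calc ∫⁻ x in s, ‖x - b‖ₑ ^ (-a) ∂μ
      ≤ ∫⁻ x in s, (K (x - b) + 1) ∂μ := lintegral_mono kernel_le
    _ = ∫⁻ x in s, K (x - b) ∂μ + μ s := by simp [lintegral_add_right]
    _ ≤ ∫⁻ x, K (x - b) ∂μ + μ s := add_le_add_left (setLIntegral_le_lintegral _ _) _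
    _ = ∫⁻ x in ball (0 : E) 1, ‖x‖ₑ ^ (-a) ∂μ + μ s := by
        rw [lintegral_sub_right_eq_self, lintegral_indicator measurableSet_ball]

theorem exists_forall_setLIntegral_enorm_rpow_neg_mul_enorm_sub_rpow_neg_le {a b : ℝ}
    (ha : 0 ≤ a) (hb : 0 ≤ b) (hab : a + b < Module.finrank ℝ E) {s : Set E}
    (hμs : μ s ≠ ∞) :
    ∃ C : ℝ≥0, ∀ c : E, ∫⁻ x in s, ‖x‖ₑ ^ (-a) * ‖x - c‖ₑ ^ (-b) ∂μ ≤ C := by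
  obtain ⟨C, hC⟩ := exists_forall_setLIntegral_enorm_sub_rpow_neg_le μ (by positivity) hab hμs
  refine ⟨C + C, fun c => ?_⟩
  calc ∫⁻ x in s, ‖x‖ₑ ^ (-a) * ‖x - c‖ₑ ^ (-b) ∂μ
      ≤ ∫⁻ x in s, (‖x - 0‖ₑ ^ (-(a + b)) + ‖x - c‖ₑ ^ (-(a + b))) ∂μ :=
        lintegral_mono fun x => by
          rw [sub_zero]
          exact rpow_neg_mul_rpow_neg_le_add _ _ ha hb
    _ = ∫⁻ x in s, ‖x - 0‖ₑ ^ (-(a + b)) ∂μ + ∫⁻ x in s, ‖x - c‖ₑ ^ (-(a + b)) ∂μ :=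
        lintegral_add_right _ (by fun_prop)
    _ ≤ ↑(C + C) := by
        rw [ENNReal.coe_add]
        exact add_le_add (hC 0) (hC c)

end RieszKernel

theorem abs_rpow_sub_rpow_le {p a b : ℝ} (hp : 1 ≤ p) (ha : a ∈ Icc 0 1) (hb : b ∈ Icc 0 1) :
    |a ^ p - b ^ p| ≤ p * |a - b| := by
  refine (convex_Icc (0 : ℝ) 1).norm_image_sub_le_of_norm_hasDerivWithin_le
    (fun t _ => (Real.hasDerivAt_rpow_const (Or.inr hp)).hasDerivWithinAt) (fun t ht => ?_) hb ha
  have : t ^ (p - 1) ≤ 1 := Real.rpow_le_one ht.1 ht.2 (by linarith)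
  rw [Real.norm_of_nonneg (mul_nonneg (by linarith) (Real.rpow_nonneg ht.1 _))]
  exact mul_le_of_le_one_right (by linarith) this

theorem mul_abs_sub_le_abs_rpow_sub_rpow {p c a b : ℝ} (hp : 1 ≤ p) (ha : a ∈ Icc 0 1)
    (hb : b ∈ Icc 0 1) (hca : c ≤ a ^ p) (hcb : c ≤ b ^ p) :
    c * |a - b| ≤ |a ^ p - b ^ p| := by
  wlog hab : a ≤ b generalizing a b
  · rw [abs_sub_comm, abs_sub_comm (a ^ p)]
    exact this hb ha hcb hca (le_of_not_ge hab)
  have rpow_eq {t : ℝ} (ht : t ∈ Icc 0 1) : t ^ p = t ^ (p - 1) * t := by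
    rw [← Real.rpow_add_one' ht.1 (by linarith), sub_add_cancel]
  have rpow_sub_one_le : a ^ (p - 1) ≤ b ^ (p - 1) :=
    Real.rpow_le_rpow ha.1 hab (by linarith)
  have rpow_le : b ^ p ≤ b ^ (p - 1) := by
    rw [rpow_eq hb]
    exact mul_le_of_le_one_right (Real.rpow_nonneg hb.1 _) hb.2
  calc c * |a - b| = c * (b - a) := by rw [abs_sub_comm, abs_of_nonneg (sub_nonneg.2 hab)]
    _ ≤ b ^ (p - 1) * (b - a) :=
        mul_le_mul_of_nonneg_right (hcb.trans rpow_le) (sub_nonneg.2 hab)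
    _ = b ^ p - b ^ (p - 1) * a := by rw [rpow_eq hb]; ring
    _ ≤ b ^ p - a ^ p := by
        rw [rpow_eq ha]
        gcongr
        exact ha.1
    _ ≤ |a ^ p - b ^ p| := by
        rw [abs_sub_comm]
        exact le_abs_self _

theorem abs_sub_le_abs_abs_sub_abs_of_sign_eq {a b : ℝ}
    (h : SignType.sign a = SignType.sign b) : |a - b| ≤ |(|a| - |b|)| := by
  have sign_le : |((SignType.sign b : SignType) : ℝ)| ≤ 1 := by
    cases SignType.sign b <;> simp
  calc |a - b| = |(SignType.sign b : ℝ)| * |(|a| - |b|)| := by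
        rw [← abs_mul, mul_sub, sign_mul_abs, ← h, sign_mul_abs]
    _ ≤ |(|a| - |b|)| := mul_le_of_le_one_left (abs_nonneg _) sign_le

theorem exists_lt_sum_eq {ι : Type*} [Fintype ι] {c : ι → ℝ} (hc : ∀ i, 0 < c i) {b : ℝ}
    (hb : 0 ≤ b) (hbc : b < ∑ i, c i) :
    ∃ e : ι → ℝ, (∀ i, 0 ≤ e i) ∧ (∀ i, e i < c i) ∧ ∑ i, e i = b := by
  have sum_pos : 0 < ∑ i, c i := hb.trans_lt hbc
  refine ⟨fun i => b / (∑ i, c i) * c i, fun i => ?_, fun i => ?_, ?_⟩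
  · have := hc i
    positivity
  · exact mul_lt_of_lt_one_left (hc i) ((div_lt_one sum_pos).2 hbc)
  · rw [← Finset.mul_sum, div_mul_cancel₀ b sum_pos.ne']

theorem sub_le_sum_one_sub_single_succAbove {n : ℕ} {a : ℝ} (ha : 0 ≤ a) (k i : Fin (n + 1)) :
    n - a ≤ ∑ j : Fin n, (1 - (Pi.single k a : Fin (n + 1) → ℝ) (i.succAbove j)) := by
  have single_nonneg : 0 ≤ (Pi.single k a : Fin (n + 1) → ℝ) := Pi.single_nonneg.2 ha
  have sum_eq : ∑ l, (Pi.single k a : Fin (n + 1) → ℝ) l = a := by simp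
  rw [Fin.sum_univ_succAbove _ i] at sum_eq
  have sum_le : ∑ j : Fin n, (Pi.single k a : Fin (n + 1) → ℝ) (i.succAbove j) ≤ a :=
    (le_add_of_nonneg_left (single_nonneg i)).trans_eq sum_eq
  simpa only [Finset.sum_sub_distrib, Finset.sum_const, Finset.card_univ, Fintype.card_fin,
    nsmul_eq_mul, mul_one, sub_le_sub_iff_left] using sum_le

section Superellipsoid

variable {n : ℕ} {p : Fin (n + 1) → ℝ} {x y : Fin (n + 1) → ℝ} {i : Fin (n + 1)} {s : SignType}

/-- The hypersurface `∑ |xᵢ|^pᵢ = 1` in `ℝⁿ⁺¹`; the boundary of `D_m` is the case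
`p = (m, 2, 2, 2)` in real coordinates. -/
def superellipsoid (p : Fin (n + 1) → ℝ) : Set (Fin (n + 1) → ℝ) :=
  {x | ∑ i, |x i| ^ p i = 1}

/-- The part of the superellipsoid where the `i`-th coordinate has sign `s` and its term is at
least the average of all terms. Over the other coordinates it is a Lipschitz graph; the patch with
`s = 0` is empty when `p i ≠ 0`. -/
def superellipsoidPatch (p : Fin (n + 1) → ℝ) (i : Fin (n + 1)) (s : SignType) :
    Set (Fin (n + 1) → ℝ) :=
  {x ∈ superellipsoid p | SignType.sign (x i) = s ∧ ((n : ℝ) + 1)⁻¹ ≤ |x i| ^ p i}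

theorem superellipsoid_subset_iUnion_patch :
    superellipsoid p ⊆ ⋃ q : Fin (n + 1) × SignType, superellipsoidPatch p q.1 q.2 := by
  intro x hx
  obtain ⟨i, -, hi⟩ : ∃ i ∈ Finset.univ, ((n : ℝ) + 1)⁻¹ ≤ |x i| ^ p i := by
    refine Finset.exists_le_of_sum_le Finset.univ_nonempty ?_
    rw [show ∑ i, |x i| ^ p i = 1 from hx]
    simp [mul_inv_cancel₀ (Nat.cast_add_one_ne_zero (R := ℝ) n)]
  exact mem_iUnion.2 ⟨(i, SignType.sign (x i)), hx, rfl, hi⟩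

theorem abs_le_one_of_mem_superellipsoid (hp : ∀ i, 0 < p i) (hx : x ∈ superellipsoid p)
    (i : Fin (n + 1)) : |x i| ≤ 1 := by
  have term_le : |x i| ^ p i ≤ 1 := by
    rw [← show ∑ i, |x i| ^ p i = 1 from hx]
    exact Finset.single_le_sum (f := fun i => |x i| ^ p i) (fun j _ => by positivity)
      (Finset.mem_univ i)
  by_contra! h
  exact (Real.one_lt_rpow h (hp i)).not_ge term_le

theorem abs_mem_Icc_of_mem_superellipsoid (hp : ∀ i, 0 < p i) (hx : x ∈ superellipsoid p)
    (i : Fin (n + 1)) : |x i| ∈ Icc 0 1 :=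
  ⟨abs_nonneg _, abs_le_one_of_mem_superellipsoid hp hx i⟩

theorem abs_rpow_sub_rpow_le_mul_dist_removeNth (hp : ∀ i, 1 ≤ p i) (hx : x ∈ superellipsoid p)
    (hy : y ∈ superellipsoid p) (i : Fin (n + 1)) :
    |(|x i| ^ p i - |y i| ^ p i)| ≤
      (∑ j, p (i.succAbove j)) * dist (i.removeNth x) (i.removeNth y) := by
  have hp0 (j) : 0 < p j := one_pos.trans_le (hp j)
  have sum_eq : |x i| ^ p i - |y i| ^ p i =
      ∑ j, (|y (i.succAbove j)| ^ p (i.succAbove j) - |x (i.succAbove j)| ^ p (i.succAbove j)) := by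
    have hx' : ∑ i, |x i| ^ p i = 1 := hx
    have hy' : ∑ i, |y i| ^ p i = 1 := hy
    rw [Fin.sum_univ_succAbove _ i] at hx' hy'
    rw [Finset.sum_sub_distrib]
    linarith
  rw [sum_eq, Finset.sum_mul]
  refine (Finset.abs_sum_le_sum_abs _ _).trans (Finset.sum_le_sum fun j _ => ?_)
  calc |(|y (i.succAbove j)| ^ p (i.succAbove j) - |x (i.succAbove j)| ^ p (i.succAbove j))|
      ≤ p (i.succAbove j) * |(|y (i.succAbove j)| - |x (i.succAbove j)|)| :=
        abs_rpow_sub_rpow_le (hp _) (abs_mem_Icc_of_mem_superellipsoid hp0 hy _)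
          (abs_mem_Icc_of_mem_superellipsoid hp0 hx _)
    _ ≤ p (i.succAbove j) * dist (i.removeNth x) (i.removeNth y) := by
        refine mul_le_mul_of_nonneg_left ?_ (hp0 _).le
        rw [dist_comm]
        exact (abs_abs_sub_abs_le _ _).trans (dist_le_pi_dist (i.removeNth y) (i.removeNth x) j)

theorem exists_antilipschitzWith_domRestrict_superellipsoidPatch (hp : ∀ i, 1 ≤ p i)
    (i : Fin (n + 1)) (s : SignType) :
    ∃ K : ℝ≥0, AntilipschitzWith K
      ((superellipsoidPatch p i s).domRestrict fun x => i.removeNth x) := by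
  have sum_nonneg : 0 ≤ ∑ j, p (i.succAbove j) :=
    Finset.sum_nonneg fun j _ => zero_le_one.trans (hp _)
  refine ⟨⟨1 + (n + 1) * ∑ j, p (i.succAbove j), by positivity⟩, .of_le_mul_dist ?_⟩
  rintro ⟨x, hx, hxs, hxi⟩ ⟨y, hy, hys, hyi⟩
  change dist x y ≤ (1 + (n + 1) * ∑ j, p (i.succAbove j)) * dist (i.removeNth x) (i.removeNth y)
  set D := dist (i.removeNth x) (i.removeNth y)
  have dist_i : dist (x i) (y i) ≤ (n + 1) * ((∑ j, p (i.succAbove j)) * D) := by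
    have hp0 (j) : 0 < p j := one_pos.trans_le (hp j)
    rw [← inv_mul_le_iff₀ (by positivity)]
    calc ((n : ℝ) + 1)⁻¹ * |x i - y i| ≤ ((n : ℝ) + 1)⁻¹ * |(|x i| - |y i|)| :=
          mul_le_mul_of_nonneg_left (abs_sub_le_abs_abs_sub_abs_of_sign_eq (hxs.trans hys.symm))
            (by positivity)
      _ ≤ |(|x i| ^ p i - |y i| ^ p i)| :=
          mul_abs_sub_le_abs_rpow_sub_rpow (hp i) (abs_mem_Icc_of_mem_superellipsoid hp0 hx i)
            (abs_mem_Icc_of_mem_superellipsoid hp0 hy i) hxi hyi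
      _ ≤ (∑ j, p (i.succAbove j)) * D := abs_rpow_sub_rpow_le_mul_dist_removeNth hp hx hy i
  have D_nonneg : 0 ≤ D := dist_nonneg
  refine (dist_pi_le_iff (by positivity)).2 fun k => ?_
  rcases i.eq_self_or_eq_succAbove k with rfl | ⟨j, rfl⟩
  · linarith
  · have : dist (x (i.succAbove j)) (y (i.succAbove j)) ≤ D :=
      dist_le_pi_dist (i.removeNth x) (i.removeNth y) j
    have : 0 ≤ (n + 1) * (∑ j, p (i.succAbove j)) * D := by positivity
    linarith

theorem inv_le_enorm_of_mem_superellipsoidPatch (hp : ∀ i, 1 ≤ p i)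
    (hx : x ∈ superellipsoidPatch p i s) : ((n : ℝ≥0∞) + 1)⁻¹ ≤ ‖x i‖ₑ := by
  obtain ⟨hx, -, hxi⟩ := hx
  have inv_le_abs : ((n : ℝ) + 1)⁻¹ ≤ |x i| :=
    hxi.trans (Real.rpow_le_self_of_le_one (abs_nonneg _)
      (abs_le_one_of_mem_superellipsoid (fun j => one_pos.trans_le (hp j)) hx i) (hp i))
  calc ((n : ℝ≥0∞) + 1)⁻¹ = ENNReal.ofReal ((n : ℝ) + 1)⁻¹ := by
        rw [ENNReal.ofReal_inv_of_pos (by positivity),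
          ENNReal.ofReal_add (by positivity) one_pos.le, ENNReal.ofReal_natCast, ENNReal.ofReal_one]
    _ ≤ ‖x i‖ₑ := by
        rw [Real.enorm_eq_ofReal_abs]
        exact ENNReal.ofReal_le_ofReal inv_le_abs

theorem prod_enorm_rpow_neg_mul_enorm_sub_rpow_neg_le_of_mem_superellipsoidPatch
    (hp : ∀ i, 1 ≤ p i) (hx : x ∈ superellipsoidPatch p i s) (z : Fin (n + 1) → ℝ)
    {a : Fin (n + 1) → ℝ} (ha : 0 ≤ a i) {e : Fin n → ℝ} (he : ∀ j, 0 ≤ e j) :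
    (∏ k, ‖x k‖ₑ ^ (-a k)) * ‖x - z‖ₑ ^ (-∑ j, e j) ≤
      ((n : ℝ≥0∞) + 1) ^ a i * ∏ j, ‖i.removeNth x j‖ₑ ^ (-a (i.succAbove j)) *
        ‖i.removeNth x j - i.removeNth z j‖ₑ ^ (-e j) := by
  have weight_le : ‖x i‖ₑ ^ (-a i) ≤ ((n : ℝ≥0∞) + 1) ^ a i := by
    rw [ENNReal.rpow_neg, ← ENNReal.inv_rpow]
    exact ENNReal.rpow_le_rpow
      (ENNReal.inv_le_iff_inv_le.1 (inv_le_enorm_of_mem_superellipsoidPatch hp hx)) ha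
  have kernel_le : ‖x - z‖ₑ ^ (-∑ j, e j) ≤
      ∏ j, ‖i.removeNth x j - i.removeNth z j‖ₑ ^ (-e j) :=
    rpow_neg_sum_le_prod _ (fun j _ => ENNReal.coe_le_coe.2
      (nnnorm_le_pi_nnnorm (x - z) (i.succAbove j))) fun j _ => he j
  rw [Fin.prod_univ_succAbove _ i, Finset.prod_mul_distrib, ← mul_assoc]
  exact mul_le_mul' (mul_le_mul' weight_le le_rfl) kernel_le

theorem removeNth_mem_pi_Icc_of_mem_superellipsoid (hp : ∀ i, 0 < p i)
    (hx : x ∈ superellipsoid p) (i : Fin (n + 1)) :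
    i.removeNth x ∈ univ.pi fun _ => Icc (-1 : ℝ) 1 :=
  fun _ _ => abs_le.1 (abs_le_one_of_mem_superellipsoid hp hx _)

theorem exists_forall_setLIntegral_pi_Icc_prod_le {a e : Fin n → ℝ} (ha : ∀ j, 0 ≤ a j)
    (he : ∀ j, 0 ≤ e j) (hae : ∀ j, a j + e j < 1) :
    ∃ C : ℝ≥0, ∀ c : Fin n → ℝ,
      ∫⁻ y in univ.pi fun _ => Icc (-1 : ℝ) 1, ∏ j, ‖y j‖ₑ ^ (-a j) * ‖y j - c j‖ₑ ^ (-e j)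
        ≤ C := by
  have factor (j : Fin n) : ∃ C : ℝ≥0, ∀ c : ℝ,
      ∫⁻ t in Icc (-1 : ℝ) 1, ‖t‖ₑ ^ (-a j) * ‖t - c‖ₑ ^ (-e j) ≤ C :=
    exists_forall_setLIntegral_enorm_rpow_neg_mul_enorm_sub_rpow_neg_le volume (ha j) (he j)
      (by simpa using hae j) (by simp)
  choose C hC using factor
  refine ⟨∏ j, C j, fun c => ?_⟩
  rw [volume_pi, setLIntegral_univ_pi_fin_prod_eq_prod (fun _ => Icc (-1 : ℝ) 1)
    (f := fun j t => ‖t‖ₑ ^ (-a j) * ‖t - c j‖ₑ ^ (-e j)) fun j => by fun_prop,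
    ENNReal.ofNNReal_finsetProd]
  exact Finset.prod_le_prod' fun j _ => hC j (c j)

theorem exists_forall_setLIntegral_superellipsoidPatch_le (hp : ∀ i, 1 ≤ p i)
    {a : Fin (n + 1) → ℝ} (ha : ∀ i, 0 ≤ a i) (ha1 : ∀ i, a i < 1) {b : ℝ} (hb : 0 ≤ b)
    (hab : b < ∑ j, (1 - a (i.succAbove j))) (s : SignType) :
    ∃ C : ℝ≥0, ∀ z : Fin (n + 1) → ℝ,
      ∫⁻ x in superellipsoidPatch p i s, (∏ k, ‖x k‖ₑ ^ (-a k)) * ‖x - z‖ₑ ^ (-b) ∂μH[n] ≤ C := by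
  obtain ⟨e, he, hea, rfl⟩ := exists_lt_sum_eq (fun j => sub_pos.2 (ha1 (i.succAbove j))) hb hab
  obtain ⟨K, hK⟩ := exists_antilipschitzWith_domRestrict_superellipsoidPatch hp i s
  obtain ⟨C, hC⟩ := exists_forall_setLIntegral_pi_Icc_prod_le (fun j => ha (i.succAbove j)) he
    fun j => lt_sub_iff_add_lt'.1 (hea j)
  refine ⟨K ^ (n : ℝ) * (((n : ℝ≥0) + 1) ^ a i * C), fun z => ?_⟩
  let F (y : Fin n → ℝ) : ℝ≥0∞ :=
    ∏ j, ‖y j‖ₑ ^ (-a (i.succAbove j)) * ‖y j - i.removeNth z j‖ₑ ^ (-e j)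
  have measurable_F : Measurable F := Finset.measurable_prod _ fun j _ => by fun_prop
  have measurable_removeNth : Measurable fun x : Fin (n + 1) → ℝ => i.removeNth x :=
    measurable_pi_lambda _ fun j => measurable_pi_apply (i.succAbove j)
  have volume_eq : (μH[n] : Measure (Fin n → ℝ)) = volume := by
    simpa using hausdorffMeasure_pi_real (ι := Fin n)
  calc ∫⁻ x in superellipsoidPatch p i s,
        (∏ k, ‖x k‖ₑ ^ (-a k)) * ‖x - z‖ₑ ^ (-∑ j, e j) ∂μH[n]
      ≤ ∫⁻ x in superellipsoidPatch p i s,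
          ((n : ℝ≥0∞) + 1) ^ a i * F (i.removeNth x) ∂μH[n] :=
        setLIntegral_mono ((measurable_F.const_mul _).comp measurable_removeNth) fun x hx =>
          prod_enorm_rpow_neg_mul_enorm_sub_rpow_neg_le_of_mem_superellipsoidPatch hp hx z (ha i) he
    _ ≤ (K : ℝ≥0∞) ^ (n : ℝ) * ∫⁻ y in univ.pi fun _ => Icc (-1 : ℝ) 1,
          ((n : ℝ≥0∞) + 1) ^ a i * F y ∂μH[n] :=
        setLIntegral_comp_le_of_antilipschitzWith_domRestrict measurable_removeNth
          (fun x hx => removeNth_mem_pi_Icc_of_mem_superellipsoid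
            (fun j => one_pos.trans_le (hp j)) hx.1 i)
          hK n.cast_nonneg (measurable_F.const_mul _)
    _ = (K : ℝ≥0∞) ^ (n : ℝ) * (((n : ℝ≥0∞) + 1) ^ a i *
          ∫⁻ y in univ.pi fun _ => Icc (-1 : ℝ) 1, F y) := by
        rw [lintegral_const_mul _ measurable_F, volume_eq]
    _ ≤ ↑(K ^ (n : ℝ) * (((n : ℝ≥0) + 1) ^ a i * C)) := by
        push_cast [ENNReal.coe_rpow_of_nonneg _ n.cast_nonneg, ENNReal.coe_rpow_of_nonneg _ (ha i)]
        gcongr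
        exact hC _

theorem exists_forall_setLIntegral_superellipsoid_le (hp : ∀ i, 1 ≤ p i)
    {a : Fin (n + 1) → ℝ} (ha : ∀ i, 0 ≤ a i) (ha1 : ∀ i, a i < 1) {b : ℝ} (hb : 0 ≤ b)
    (hab : ∀ i : Fin (n + 1), b < ∑ j, (1 - a (i.succAbove j))) :
    ∃ C : ℝ≥0, ∀ z : Fin (n + 1) → ℝ,
      ∫⁻ x in superellipsoid p, (∏ k, ‖x k‖ₑ ^ (-a k)) * ‖x - z‖ₑ ^ (-b) ∂μH[n] ≤ C := by
  choose C hC using fun q : Fin (n + 1) × SignType =>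
    exists_forall_setLIntegral_superellipsoidPatch_le hp ha ha1 hb (hab q.1) q.2
  refine ⟨∑ q, C q, fun z => ?_⟩
  calc ∫⁻ x in superellipsoid p, (∏ k, ‖x k‖ₑ ^ (-a k)) * ‖x - z‖ₑ ^ (-b) ∂μH[n]
      ≤ ∫⁻ x in ⋃ q : Fin (n + 1) × SignType, superellipsoidPatch p q.1 q.2,
          (∏ k, ‖x k‖ₑ ^ (-a k)) * ‖x - z‖ₑ ^ (-b) ∂μH[n] :=
        lintegral_mono_set superellipsoid_subset_iUnion_patch
    _ ≤ ∑ q : Fin (n + 1) × SignType, ∫⁻ x in superellipsoidPatch p q.1 q.2,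
          (∏ k, ‖x k‖ₑ ^ (-a k)) * ‖x - z‖ₑ ^ (-b) ∂μH[n] :=
        (lintegral_iUnion_le _ _).trans_eq (tsum_fintype _)
    _ ≤ ↑(∑ q, C q) := by
        push_cast
        exact Finset.sum_le_sum fun q _ => hC q z

end Superellipsoid

/-- The real coordinates `(Re w₁, Im w₁, Re w₂, Im w₂)`; the target carries the sup norm, in which
Hausdorff measure on `ℝⁿ` is Lebesgue measure. -/
def realCoords : C2 →ₗ[ℝ] Fin 4 → ℝ where
  toFun w := ![(w 0).re, (w 0).im, (w 1).re, (w 1).im]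
  map_add' w w' := by simp
  map_smul' c w := by simp

theorem realCoords_apply (w : C2) :
    realCoords w = ![(w 0).re, (w 0).im, (w 1).re, (w 1).im] :=
  rfl

theorem measurable_realCoords : Measurable realCoords :=
  realCoords.continuous_of_finiteDimensional.measurable

theorem exists_antilipschitzWith_realCoords : ∃ K : ℝ≥0, AntilipschitzWith K realCoords := by
  have injective : Function.Injective realCoords := fun w w' h => by
    ext k
    fin_cases k
    · exact Complex.ext (congrFun h 0) (congrFun h 1)
    · exact Complex.ext (congrFun h 2) (congrFun h 3)
  obtain ⟨K, -, hK⟩ := realCoords.injective_iff_antilipschitz.1 injective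
  exact ⟨K, hK⟩

theorem norm_realCoords_le (w : C2) : ‖realCoords w‖ ≤ ‖w‖ := by
  refine (pi_norm_le_iff_of_nonneg (norm_nonneg w)).2 fun k => ?_
  fin_cases k
  · exact (Complex.abs_re_le_norm _).trans (PiLp.norm_apply_le w 0)
  · exact (Complex.abs_im_le_norm _).trans (PiLp.norm_apply_le w 0)
  · exact (Complex.abs_re_le_norm _).trans (PiLp.norm_apply_le w 1)
  · exact (Complex.abs_im_le_norm _).trans (PiLp.norm_apply_le w 1)

theorem realCoords_mem_superellipsoid_iff {m : ℝ} {w : C2} :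
    realCoords w ∈ superellipsoid ![m, 2, 2, 2] ↔ w ∈ bDm m := by
  have sum_eq : ∑ i, |realCoords w i| ^ (![m, 2, 2, 2] : Fin 4 → ℝ) i = rhom m w + 1 := by
    simp only [realCoords_apply, rhom, Fin.sum_univ_four, Matrix.cons_val, Real.rpow_two, sq_abs,
      Complex.sq_norm, Complex.normSq_apply]
    ring
  simp only [superellipsoid, bDm, mem_ofPred_eq, sum_eq, add_eq_right]

theorem ofReal_rpow_mul_ofReal_rpow_neg_le_realCoords {m a b : ℝ} (hm : 0 < m) (hb : 0 ≤ b)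
    {w : C2} (hw : w ∈ bDm m) (z : C2) :
    ENNReal.ofReal |(w 0).re| ^ a * ENNReal.ofReal ‖w - z‖ ^ (-b) ≤
      (∏ k, ‖realCoords w k‖ₑ ^ (-(Pi.single 0 (max (-a) 0) : Fin 4 → ℝ) k)) *
        ‖realCoords w - realCoords z‖ₑ ^ (-b) := by
  have abs_re_le_one : |(w 0).re| ≤ 1 :=
    abs_le_one_of_mem_superellipsoid (by simp [Fin.forall_fin_succ, hm])
      (realCoords_mem_superellipsoid_iff.2 hw) 0
  have prod_eq : ∏ k, ‖realCoords w k‖ₑ ^ (-(Pi.single 0 (max (-a) 0) : Fin 4 → ℝ) k) =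
      ENNReal.ofReal |(w 0).re| ^ (-max (-a) 0) := by
    simp [Fin.prod_univ_succ, realCoords_apply, Real.enorm_eq_ofReal_abs]
  have enorm_le : ‖realCoords w - realCoords z‖ₑ ≤ ENNReal.ofReal ‖w - z‖ := by
    rw [← map_sub, ← ofReal_norm]
    exact ENNReal.ofReal_le_ofReal (norm_realCoords_le _)
  rw [prod_eq, ENNReal.rpow_neg _ b, ENNReal.rpow_neg _ b]
  refine mul_le_mul' (ENNReal.rpow_le_rpow_of_exponent_ge (ENNReal.ofReal_le_one.2 abs_re_le_one)
    (neg_le.1 (le_max_left _ _))) ?_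
  gcongr

theorem stmt15_general {m a b : ℝ} (hm : 1 ≤ m) (ha : -1 < a) (hb : 0 ≤ b) (hb3 : b < 3)
    (hab : b < 3 + a) :
    ∃ C : ℝ, ∀ z : C2,
      ∫⁻ w in bDm m, (ENNReal.ofReal |(w 0).re|) ^ a * (ENNReal.ofReal ‖w - z‖) ^ (-b) ∂μH[3]
        ≤ ENNReal.ofReal C := by
  let α : Fin 4 → ℝ := Pi.single 0 (max (-a) 0)
  have neg_a_lt_one : -a < 1 := neg_lt.1 ha
  have lt_sum (i : Fin 4) : b < ∑ j, (1 - α (i.succAbove j)) := by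
    refine lt_of_lt_of_le ?_ (sub_le_sum_one_sub_single_succAbove (le_max_right (-a) 0) 0 i)
    rw [lt_sub_comm, Nat.cast_ofNat]
    exact max_lt (by linarith) (by linarith)
  obtain ⟨C, hC⟩ : ∃ C : ℝ≥0, ∀ x : Fin 4 → ℝ,
      ∫⁻ y in superellipsoid ![m, 2, 2, 2], (∏ k, ‖y k‖ₑ ^ (-α k)) * ‖y - x‖ₑ ^ (-b)
        ∂μH[(3 : ℕ)] ≤ C :=
    exists_forall_setLIntegral_superellipsoid_le (by simp [Fin.forall_fin_succ, hm])
      (by simp [α, Fin.forall_fin_succ]) (by simp [α, Fin.forall_fin_succ, neg_a_lt_one]) hb lt_sum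
  obtain ⟨K, hK⟩ := exists_antilipschitzWith_realCoords
  refine ⟨K ^ (3 : ℝ) * C, fun z => ?_⟩
  have measurable_kernel : Measurable fun y : Fin 4 → ℝ =>
      (∏ k, ‖y k‖ₑ ^ (-α k)) * ‖y - realCoords z‖ₑ ^ (-b) := by fun_prop
  calc ∫⁻ w in bDm m, (ENNReal.ofReal |(w 0).re|) ^ a * (ENNReal.ofReal ‖w - z‖) ^ (-b) ∂μH[3]
      ≤ ∫⁻ w in bDm m, (∏ k, ‖realCoords w k‖ₑ ^ (-α k)) *
          ‖realCoords w - realCoords z‖ₑ ^ (-b) ∂μH[3] :=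
        setLIntegral_mono (measurable_kernel.comp measurable_realCoords) fun w hw =>
          ofReal_rpow_mul_ofReal_rpow_neg_le_realCoords (one_pos.trans_le hm) hb hw z
    _ ≤ (K : ℝ≥0∞) ^ (3 : ℝ) * ∫⁻ y in superellipsoid ![m, 2, 2, 2],
          (∏ k, ‖y k‖ₑ ^ (-α k)) * ‖y - realCoords z‖ₑ ^ (-b) ∂μH[3] :=
        setLIntegral_comp_le_of_antilipschitzWith_domRestrict measurable_realCoords
          (fun _ => realCoords_mem_superellipsoid_iff.2) (fun w w' => hK w w') zero_le_three
          measurable_kernel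
    _ ≤ (K : ℝ≥0∞) ^ (3 : ℝ) * C := by
        gcongr
        exact_mod_cast hC (realCoords z)
    _ = ENNReal.ofReal (K ^ (3 : ℝ) * C) := by
        rw [← ENNReal.coe_rpow_of_nonneg _ zero_le_three, ← ENNReal.coe_mul,
          ← ENNReal.ofReal_coe_nnreal, NNReal.coe_mul, NNReal.coe_rpow]

/-- Fix `3/2 < m < 2`. There is `C < ∞` such that for every `z ∈ bD_m`:
`∫_{bD_m} |Re w₁|^{2m−4}·|w−z|^{−2} dH³(w) ≤ C`; in particular this integral is finite
for every `z ∈ bD_m` (the integrand is `+∞` where singular). -/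
theorem stmt15 (m : ℝ) (hm1 : 3 / 2 < m) (hm2 : m < 2) :
    ∃ C : ℝ, ∀ z ∈ bDm m,
      (∫⁻ w in bDm m,
          (ENNReal.ofReal |(w 0).re|) ^ (2 * m - 4)
            * (ENNReal.ofReal ‖w - z‖) ^ (-2 : ℝ) ∂μH[3])
        ≤ ENNReal.ofReal C ∧
      (∫⁻ w in bDm m,
          (ENNReal.ofReal |(w 0).re|) ^ (2 * m - 4)
            * (ENNReal.ofReal ‖w - z‖) ^ (-2 : ℝ) ∂μH[3]) < ⊤ := by
  obtain ⟨C, hC⟩ := stmt15_general (m := m) (a := 2 * m - 4) (b := 2) (by linarith) (by linarith)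
    zero_le_two (by norm_num) (by linarith)
  exact ⟨C, fun z _ => ⟨hC z, (hC z).trans_lt ENNReal.ofReal_lt_top⟩⟩

end
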